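/- Let H ≥ 1 and let X^{(1)}, …, X^{(n)}, X^{(n+1)} be independent and identically distributed random vectors with values in ℝ^H on a probability space (Ω, P). Let α_1, …, α_H be strictly positive real constants, let δ ∈ (0,1), and set p := ⌈(n+1)(1−δ)⌉; assume p ≤ n. For each i define the score S^{(i)} := max_{1≤h≤H} α_h X^{(i)}_h, and let Q be the p-th smallest value among S^{(1)}, …, S^{(n)}. Then P( for all h ∈ {1,…,H}: X^{(n+1)}_h ≤ Q/α_h ) ≥ 1 − δ. -/

import Mathlib

/-!
Independent identically distributed scores are exchangeable. Call the number of scores strictly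
below the `j`-th one its rank. For every outcome at least `p` of the `n + 1` scores have rank less
than `p`, so the probabilities of these `n + 1` events add up to at least `p`; by exchangeability
they are all equal, hence each is at least `p / (n + 1)`, which is at least `1 - δ`. The test score
is at most the `p`-th smallest calibration score exactly when its rank is less than `p`.
-/

open MeasureTheory ProbabilityTheory

/-- The `k`-th smallest value (k-th order statistic, 1-indexed) of a finite tuple of reals:
the `k`-th entry of the tuple sorted in non-decreasing order. -/
noncomputable def kthSmallest {m : ℕ} (r : Fin m → ℝ) (k : ℕ) : ℝ :=
  ((List.ofFn r).mergeSort (· ≤ ·)).getD (k - 1) 0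

open scoped ENNReal Finset

section OrderStatistic

lemma mergeSort_ofFn_eq_ofFn_comp_sort {β : Type*} [LinearOrder β] {m : ℕ} (r : Fin m → β) :
    (List.ofFn r).mergeSort (· ≤ ·) = List.ofFn (r ∘ Tuple.sort r) :=
  List.Perm.eq_of_sortedLE List.sortedLE_mergeSort (Tuple.monotone_sort r).sortedLE_ofFn
    ((List.mergeSort_perm _ _).trans (Equiv.Perm.ofFn_comp_perm _ _).symm)

variable {m k : ℕ} (r : Fin m → ℝ)

lemma kthSmallest_eq_comp_sort (hk : k < m) :
    kthSmallest r (k + 1) = (r ∘ Tuple.sort r) ⟨k, hk⟩ := by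
  rw [kthSmallest, mergeSort_ofFn_eq_ofFn_comp_sort, Nat.add_sub_cancel,
    List.getD_eq_getElem _ _ (by simpa using hk), List.getElem_ofFn]

lemma le_kthSmallest_iff_card_lt (hk : 0 < k) (hkm : k ≤ m) {a : ℝ} :
    a ≤ kthSmallest r k ↔ #{i | r i < a} < k := by
  obtain ⟨k, rfl⟩ := Nat.exists_eq_add_one_of_ne_zero hk.ne'
  have hcard : #{i | (r ∘ Tuple.sort r) i < a} = #{i | r i < a} :=
    Finset.card_equiv (Tuple.sort r) (by simp)
  rw [kthSmallest_eq_comp_sort r hkm, ← not_lt,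
    ← Tuple.lt_card_lt_iff_apply_lt_of_monotone (Tuple.monotone_sort r), hcard, not_lt,
    Nat.lt_succ_iff]

end OrderStatistic

section StrictRank

variable {ι β : Type*} [Fintype ι] [LinearOrder β]

/-- The rank of the `j`-th entry of a finite family, counted from `0`: the number of entries
strictly below it. Tied entries share the lowest of their ranks. -/
def strictRank (s : ι → β) (j : ι) : ℕ := #{i | s i < s j}

lemma strictRank_comp_perm (s : ι → β) (σ : Equiv.Perm ι) (j : ι) :
    strictRank (s ∘ σ) j = strictRank s (σ j) :=
  Finset.card_equiv σ (by simp)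

lemma le_card_strictRank_lt (s : ι → β) {p : ℕ} (hp : p ≤ Fintype.card ι) :
    p ≤ #{j | strictRank s j < p} := by
  by_contra! hlt
  have hex : ∃ j, p ≤ strictRank s j := by
    by_contra! hall
    rw [Finset.filter_true_of_mem fun j _ ↦ hall j, Finset.card_univ] at hlt
    exact hlt.not_ge hp
  -- Entries below the smallest entry of rank at least `p` all have rank less than `p`.
  obtain ⟨j, hj, hmin⟩ := Finset.exists_min_image {j | p ≤ strictRank s j} s
    (by simpa [Finset.Nonempty] using hex)
  have hle : strictRank s j ≤ #{i | strictRank s i < p} := by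
    refine Finset.card_le_card fun i hi ↦ ?_
    simp only [Finset.mem_filter_univ] at hi hmin ⊢
    exact lt_of_not_ge fun h ↦ (hmin i h).not_gt hi
  exact ((Finset.mem_filter_univ j).1 hj).not_gt (hle.trans_lt hlt)

lemma measurable_strictRank [TopologicalSpace β] [OrderClosedTopology β]
    [SecondCountableTopology β] [MeasurableSpace β] [OpensMeasurableSpace β] (j : ι) :
    Measurable fun s : ι → β ↦ strictRank s j := by
  have hsum (s : ι → β) : strictRank s j = ∑ i, if s i < s j then 1 else 0 :=
    Finset.card_filter _ _
  simp only [hsum]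
  exact Finset.measurable_sum _ fun i _ ↦
    Measurable.ite (measurableSet_lt (measurable_pi_apply i) (measurable_pi_apply j))
      measurable_const measurable_const

lemma strictRank_last {n : ℕ} (s : Fin (n + 1) → β) :
    strictRank s (Fin.last n) = #{i : Fin n | s i.castSucc < s (Fin.last n)} := by
  simp only [strictRank, Finset.card_filter, Fin.sum_univ_castSucc, lt_irrefl, if_false, add_zero]

end StrictRank

lemma natCast_mul_measure_univ_le_sum_measure {Ω ι : Type*} [MeasurableSpace Ω] {μ : Measure Ω}
    [Fintype ι] {A : ι → Set Ω} [∀ ω, DecidablePred fun j ↦ ω ∈ A j]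
    (hA : ∀ j, NullMeasurableSet (A j) μ) {p : ℕ} (hp : ∀ ω, p ≤ #{j | ω ∈ A j}) :
    p * μ Set.univ ≤ ∑ j, μ (A j) :=
  calc p * μ Set.univ = ∫⁻ _, p ∂μ := (lintegral_const _).symm
    _ ≤ ∫⁻ ω, ∑ j, (A j).indicator 1 ω ∂μ := by
      refine lintegral_mono fun ω ↦ ?_
      simpa [Set.indicator_apply] using hp ω
    _ = ∑ j, ∫⁻ ω, (A j).indicator 1 ω ∂μ :=
      lintegral_finsetSum' _ fun j _ ↦ aemeasurable_one.indicator₀ (hA j)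
    _ = ∑ j, μ (A j) := by simp only [lintegral_indicator_one₀ (hA _)]

/-- Exchangeability of a family of random variables: permuting the indices does not change the
joint law. As `IdentDistrib` includes a.e. measurability, so does this notion. -/
def Exchangeable {Ω ι β : Type*} [MeasurableSpace Ω] [MeasurableSpace β] (X : ι → Ω → β)
    (P : Measure Ω) : Prop :=
  ∀ σ : Equiv.Perm ι, IdentDistrib (fun ω i ↦ X (σ i) ω) (fun ω i ↦ X i ω) P P

namespace Exchangeable

variable {Ω ι β : Type*} [MeasurableSpace Ω] {P : Measure Ω} [MeasurableSpace β] {X : ι → Ω → β}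

lemma of_iIndepFun [Countable ι] (hindep : iIndepFun X P)
    (hident : ∀ i j, IdentDistrib (X i) (X j) P P) : Exchangeable X P := fun σ ↦
  IdentDistrib.pi (fun i ↦ hident (σ i) i) (hindep.precomp σ.injective) hindep

lemma comp {γ : Type*} [MeasurableSpace γ] (hX : Exchangeable X P) {g : β → γ}
    (hg : Measurable g) : Exchangeable (fun i ω ↦ g (X i ω)) P := fun σ ↦
  (hX σ).comp (u := fun x i ↦ g (x i)) (by fun_prop)

variable [Fintype ι] [LinearOrder β] [TopologicalSpace β] [OrderClosedTopology β]
  [SecondCountableTopology β] [OpensMeasurableSpace β]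

lemma measure_strictRank_lt_eq (hX : Exchangeable X P) (p : ℕ) (j l : ι) :
    P {ω | strictRank (X · ω) j < p} = P {ω | strictRank (X · ω) l < p} := by
  classical
  have hswap := (hX (Equiv.swap l j)).measure_mem_eq
    (measurableSet_lt (measurable_strictRank l) (measurable_const (a := p)))
  have hrank (ω : Ω) : strictRank (fun i ↦ X (Equiv.swap l j i) ω) l = strictRank (X · ω) j :=
    (strictRank_comp_perm (X · ω) _ l).trans (by rw [Equiv.swap_apply_left])
  simpa only [Set.preimage_ofPred_eq, hrank] using hswap

lemma div_card_le_measure_strictRank_lt [IsProbabilityMeasure P] (hX : Exchangeable X P) {p : ℕ}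
    (hp : p ≤ Fintype.card ι) (l : ι) :
    (p : ℝ≥0∞) / Fintype.card ι ≤ P {ω | strictRank (X · ω) l < p} := by
  have hmeas (j : ι) : NullMeasurableSet {ω | strictRank (X · ω) j < p} P :=
    (hX 1).aemeasurable_snd.nullMeasurableSet_preimage
      (measurableSet_lt (measurable_strictRank j) measurable_const)
  refine ENNReal.div_le_of_le_mul' ?_
  calc (p : ℝ≥0∞) = p * P Set.univ := by rw [measure_univ, mul_one]
    _ ≤ ∑ j, P {ω | strictRank (X · ω) j < p} :=
      natCast_mul_measure_univ_le_sum_measure hmeas fun ω ↦ le_card_strictRank_lt (X · ω) hp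
    _ = Fintype.card ι * P {ω | strictRank (X · ω) l < p} := by
      simp [hX.measure_strictRank_lt_eq p _ l]

lemma div_le_measure_le_kthSmallest [IsProbabilityMeasure P] {n : ℕ} {S : Fin (n + 1) → Ω → ℝ}
    (hS : Exchangeable S P) {p : ℕ} (hp : 0 < p) (hpn : p ≤ n) :
    (p : ℝ≥0∞) / (n + 1) ≤
      P {ω | S (Fin.last n) ω ≤ kthSmallest (fun i : Fin n ↦ S i.castSucc ω) p} := by
  simpa [le_kthSmallest_iff_card_lt _ hp hpn, strictRank_last] using
    hS.div_card_le_measure_strictRank_lt (p := p) (by simpa using hpn.trans n.le_succ) (Fin.last n)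

end Exchangeable

section MaxScore

variable {ι : Type*} [Fintype ι] [Nonempty ι] {α : ι → ℝ}

/-- The max-normalized score `max_h α_h x_h` of a vector `x` of prediction errors. -/
noncomputable def maxScore (α x : ι → ℝ) : ℝ :=
  Finset.univ.sup' Finset.univ_nonempty fun h ↦ α h * x h

lemma measurable_maxScore : Measurable (maxScore α) :=
  (Continuous.finset_sup'_apply _ fun _ _ ↦ by fun_prop).measurable

lemma maxScore_le_iff (hα : ∀ h, 0 < α h) {x : ι → ℝ} {q : ℝ} :
    maxScore α x ≤ q ↔ ∀ h, x h ≤ q / α h := by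
  simp [maxScore, le_div_iff₀' (hα _)]

end MaxScore

lemma ofReal_one_sub_le_ceil_div (n : ℕ) (δ : ℝ) :
    ENNReal.ofReal (1 - δ) ≤ (⌈((n : ℝ) + 1) * (1 - δ)⌉₊ : ℝ≥0∞) / (n + 1) := by
  rw [ENNReal.le_div_iff_mul_le (by simp) (by simp), mul_comm]
  calc ((n : ℝ≥0∞) + 1) * ENNReal.ofReal (1 - δ)
      = ENNReal.ofReal (((n : ℝ) + 1) * (1 - δ)) := by
        rw [ENNReal.ofReal_mul (by positivity), ← Nat.cast_add_one, ← Nat.cast_add_one,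
          ENNReal.ofReal_natCast]
    _ ≤ ⌈((n : ℝ) + 1) * (1 - δ)⌉₊ :=
        ENNReal.ofReal_le_of_le_toReal (by simpa using Nat.le_ceil _)

theorem conformal_max_normalized_general {Ω ι : Type*} [MeasurableSpace Ω] {P : Measure Ω}
    [IsProbabilityMeasure P] [Fintype ι] [Nonempty ι] {n : ℕ} {X : Fin (n + 1) → Ω → ι → ℝ}
    (hX : Exchangeable X P) {α : ι → ℝ} (hα : ∀ h, 0 < α h) {p : ℕ} (hp : 0 < p) (hpn : p ≤ n) :
    (p : ℝ≥0∞) / (n + 1) ≤ P {ω | ∀ h, X (Fin.last n) ω h ≤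
      kthSmallest (fun i : Fin n ↦ maxScore α (X i.castSucc ω)) p / α h} := by
  simpa only [maxScore_le_iff hα] using
    (hX.comp (measurable_maxScore (α := α))).div_le_measure_le_kthSmallest hp hpn

/-- Conformal guarantee for max-normalized scores over a horizon of `H+1 ≥ 1` steps:
for i.i.d. random vectors `X 0, …, X n` in `ℝ^{H+1}`, strictly positive constants `α`,
`δ ∈ (0,1)` and `p := ⌈(n+1)(1-δ)⌉ ≤ n`, letting `S i := max_h α h * X i h` and `Q` be the
`p`-th smallest value among the first `n` scores, the test vector `X (Fin.last n)` satisfies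
`X_h ≤ Q / α h` for all `h` simultaneously with probability at least `1 - δ`. -/
theorem conformal_max_normalized {Ω : Type*} [MeasurableSpace Ω] (P : Measure Ω)
    [IsProbabilityMeasure P]
    (H n : ℕ) (X : Fin (n + 1) → Ω → (Fin (H + 1) → ℝ))
    (hmeas : ∀ i, Measurable (X i))
    (hindep : iIndepFun X P)
    (hident : ∀ i j, IdentDistrib (X i) (X j) P P)
    (α : Fin (H + 1) → ℝ) (hα : ∀ h, 0 < α h)
    (δ : ℝ) (hδ : δ ∈ Set.Ioo (0 : ℝ) 1)
    (p : ℕ) (hp : p = ⌈((n : ℝ) + 1) * (1 - δ)⌉₊) (hpn : p ≤ n)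
    (S : Fin (n + 1) → Ω → ℝ)
    (hS : ∀ i ω, S i ω = Finset.univ.sup' Finset.univ_nonempty (fun h => α h * X i ω h))
    (Q : Ω → ℝ)
    (hQ : ∀ ω, Q ω = kthSmallest (fun i : Fin n => S i.castSucc ω) p) :
    P {ω | ∀ h, X (Fin.last n) ω h ≤ Q ω / α h} ≥ ENNReal.ofReal (1 - δ) := by
  obtain rfl : S = fun i ω ↦ maxScore α (X i ω) := funext₂ hS
  obtain rfl := funext hQ
  have hp0 : 0 < p := hp ▸ Nat.ceil_pos.2 (mul_pos n.cast_add_one_pos (sub_pos.2 hδ.2))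
  exact (hp ▸ ofReal_one_sub_le_ceil_div n δ).trans
    (conformal_max_normalized_general (.of_iIndepFun hindep hident) hα hp0 hpn)
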